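/- Fix a real number q with 0 < q < 1 and a complex number t with |t| < 1. For all integers m, n ≥ 0, the Rogers polynomials of type A₁ satisfy the orthogonality and norm formula (1/2π) ∫₀^{2π} P_m(e^{iφ}; q, t) · P_n(e^{iφ}; q, t) · μ(e^{iφ}; q, t) dφ = δ_{mn} · ( ∏_{j=0}^{n−1} ((1 − q^{j+1})(1 − t² qʲ)) / ((1 − t q^{j+1})(1 − t qʲ)) ) · (1/2π) ∫₀^{2π} μ(e^{iφ}; q, t) dφ. (Formula (4.22) of the paper.) -/

import Mathlib

open scoped BigOperators
open Filter

noncomputable section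

/-- Symmetric monomial `M_r(X) = X^r + X^{-r}` for `r ≥ 1`, `M_0 = 1`. -/
def Msym (r : ℕ) (X : ℂ) : ℂ := if r = 0 then 1 else X ^ r + X⁻¹ ^ r

/-- Continuous q-Hermite Laurent polynomial (Macdonald polynomial of type A₁ at t = 0). -/
def PbarA1 (q : ℝ) (n : ℕ) (X : ℂ) : ℂ :=
  Msym n X + ∑ j ∈ Finset.Icc 1 (n / 2),
    (∏ i ∈ Finset.range j, (1 - (q : ℂ) ^ (n - i)) / (1 - (q : ℂ) ^ (i + 1))) *
      Msym (n - 2 * j) X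

/-- Global q-Whittaker function of type A₁. -/
def whitA1 (q : ℝ) (X Λ : ℂ) : ℂ :=
  ∑' n : ℕ, ((q ^ ((n : ℝ) ^ 2 / 4) : ℝ) : ℂ) * X ^ n * PbarA1 q n Λ /
    ∏ j ∈ Finset.Icc 1 n, (1 - (q : ℂ) ^ j)

/-- Theta function `θ(Λ) = ∑_{j ∈ ℤ} q^{j²/4} Λ^j`. -/
def thetaA1 (q : ℝ) (Λ : ℂ) : ℂ :=
  ∑' j : ℤ, ((q ^ ((j : ℝ) ^ 2 / 4) : ℝ) : ℂ) * Λ ^ j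

/-- Rogers Laurent polynomial (symmetric Macdonald polynomial of type A₁). -/
def RogersA1 (q : ℝ) (t : ℂ) (n : ℕ) (X : ℂ) : ℂ :=
  Msym n X + ∑ j ∈ Finset.Icc 1 (n / 2),
    (∏ i ∈ Finset.range j,
      ((1 - (q : ℂ) ^ (n - i)) * (1 - t * (q : ℂ) ^ i)) /
      ((1 - (q : ℂ) ^ (1 + i)) * (1 - t * (q : ℂ) ^ (n - i - 1)))) *
    Msym (n - 2 * j) X

/-- Global q,t-spherical function of type A₁, with `t = s²`. -/
def sphA1 (q s : ℝ) (X Λ : ℂ) : ℂ :=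
  ∑' n : ℕ, (s : ℂ) ^ n * ((q ^ ((n : ℝ) ^ 2 / 4) : ℝ) : ℂ) *
    RogersA1 q ((s : ℂ) ^ 2) n X * RogersA1 q ((s : ℂ) ^ 2) n Λ *
    ∏ i ∈ Finset.range n,
      ((1 - (s : ℂ) ^ 2 * (q : ℂ) ^ i) * (1 - (s : ℂ) ^ 2 * (q : ℂ) ^ (i + 1))) /
      ((1 - ((s : ℂ) ^ 2) ^ 2 * (q : ℂ) ^ i) * (1 - (q : ℂ) ^ (i + 1)))

/-- Macdonald truncated theta weight function of type A₁. -/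
def muA1 (q : ℝ) (t : ℂ) (X : ℂ) : ℂ :=
  ∏' j : ℕ, ((1 - X ^ 2 * (q : ℂ) ^ j) * (1 - X⁻¹ ^ 2 * (q : ℂ) ^ (j + 1))) /
    ((1 - t * X ^ 2 * (q : ℂ) ^ j) * (1 - t * X⁻¹ ^ 2 * (q : ℂ) ^ (j + 1)))

/-!
Write `p² = q` and `μ` for the truncated theta function. The `q`-binomial theorem turns the
generating function of the Rogers polynomials `C_n = (t; q)_n / (q; q)_n · P_n` into the statement
that `C_n` is an eigenfunction of the Macdonald `p`-shift operator, with eigenvalue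
`p⁻ⁿ (1 + t qⁿ)`. On the unit circle `μ(x) + μ(x⁻¹) = (1 + t) Δ(x)`, where `Δ` is the symmetric
weight; the operator is self-adjoint for `Δ`, because `μ(p x) = μ(x⁻¹)` and `μ` is holomorphic on
the annulus `|p| ≤ |x| ≤ 1`. The eigenvalues are pairwise distinct, whence orthogonality, and the
three-term recurrence for `C_n` then yields the norms.
-/

section Algebra

open Finset.HasAntidiagonal (antidiagonal)
open PowerSeries

variable {K : Type*} [Field K] {p q t x : K}

/-- The coefficients `(t; q)_k / (q; q)_k` of the `q`-binomial series. -/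
def qBinomCoeff (q t : K) (k : ℕ) : K :=
  ∏ i ∈ Finset.range k, (1 - t * q ^ i) / (1 - q ^ (i + 1))

/-- The Rogers polynomial `C_n(·; t | q)` (continuous `q`-ultraspherical polynomial) as a Laurent
polynomial in `x = e^{iθ}`, normalized by its generating function
`∑ C_n zⁿ = (t x z; q)_∞ (t x⁻¹ z; q)_∞ / ((x z; q)_∞ (x⁻¹ z; q)_∞)`. -/
def qUltraspherical (q t : K) (n : ℕ) (x : K) : K :=
  ∑ k ∈ antidiagonal n, (x ^ k.1 * qBinomCoeff q t k.1) * (x⁻¹ ^ k.2 * qBinomCoeff q t k.2)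

/-- The `q`-binomial series `∑ (t; q)_k / (q; q)_k z^k = (t z; q)_∞ / (z; q)_∞`. -/
def qBinomSeries (q t : K) : K⟦X⟧ := mk (qBinomCoeff q t)

@[simp]
lemma qBinomCoeff_zero (q t : K) : qBinomCoeff q t 0 = 1 := by simp [qBinomCoeff]

lemma qBinomCoeff_succ (q t : K) (k : ℕ) :
    qBinomCoeff q t (k + 1) = qBinomCoeff q t k * ((1 - t * q ^ k) / (1 - q ^ (k + 1))) :=
  Finset.prod_range_succ _ _

lemma one_sub_mul_qBinomCoeff_succ (hq : ∀ k, q ^ (k + 1) ≠ 1) (t : K) (k : ℕ) :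
    (1 - q ^ (k + 1)) * qBinomCoeff q t (k + 1) = (1 - t * q ^ k) * qBinomCoeff q t k := by
  rw [qBinomCoeff_succ]
  field_simp [sub_ne_zero.mpr (hq k).symm]

lemma qBinomCoeff_ne_zero (hq : ∀ k, q ^ (k + 1) ≠ 1) (ht : ∀ k, t * q ^ k ≠ 1) (n : ℕ) :
    qBinomCoeff q t n ≠ 0 :=
  Finset.prod_ne_zero_iff.mpr fun i _ ↦
    div_ne_zero (sub_ne_zero.mpr (ht i).symm) (sub_ne_zero.mpr (hq i).symm)

@[simp]
lemma qUltraspherical_zero (q t : K) : qUltraspherical q t 0 = 1 := by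
  ext x
  simp [qUltraspherical]

lemma qUltraspherical_inv (q t : K) (n : ℕ) (x : K) :
    qUltraspherical q t n x⁻¹ = qUltraspherical q t n x := by
  rw [qUltraspherical, qUltraspherical, ← Finset.Nat.sum_antidiagonal_swap]
  simp [mul_comm]

lemma mk_qUltraspherical (q t x : K) :
    mk (qUltraspherical q t · x) =
      rescale x (qBinomSeries q t) * rescale x⁻¹ (qBinomSeries q t) := by
  ext n
  simp [coeff_mul, qUltraspherical, qBinomSeries]

lemma rescale_mk_qUltraspherical (q t p x : K) :
    rescale p (mk (qUltraspherical q t · x)) =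
      rescale (p * x) (qBinomSeries q t) * rescale (p * x⁻¹) (qBinomSeries q t) := by
  simp [mk_qUltraspherical, rescale_rescale, mul_comm p]

lemma one_sub_mul_rescale_qBinomSeries (hq : ∀ k, q ^ (k + 1) ≠ 1) (t x : K) :
    (1 - C x * X) * rescale x (qBinomSeries q t) =
      (1 - C (t * x) * X) * rescale (q * x) (qBinomSeries q t) := by
  ext (_ | n)
  · simp only [coeff_zero_eq_constantCoeff, map_mul, map_sub, map_one, constantCoeff_X, mul_zero,
      sub_zero, one_mul]
    simp only [← coeff_zero_eq_constantCoeff_apply, coeff_rescale, pow_zero]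
  · simp only [sub_mul, one_mul, mul_assoc, map_sub, coeff_C_mul, coeff_succ_X_mul, coeff_rescale,
      qBinomSeries, coeff_mk]
    linear_combination x ^ (n + 1) * one_sub_mul_qBinomCoeff_succ hq t n

lemma mul_mk_qUltraspherical (hq : ∀ k, q ^ (k + 1) ≠ 1) (t : K) (hx : x ≠ 0) :
    (1 - C (x + x⁻¹) * X + X * X) * mk (qUltraspherical q t · x) =
      (1 - C (t * (x + x⁻¹)) * X + C (t ^ 2) * (X * X)) *
        rescale q (mk (qUltraspherical q t · x)) := by
  have hC : C x * C x⁻¹ = (1 : K⟦X⟧) := by rw [← map_mul, mul_inv_cancel₀ hx, map_one]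
  have h := congrArg₂ (· * ·) (one_sub_mul_rescale_qBinomSeries hq t x)
    (one_sub_mul_rescale_qBinomSeries hq t x⁻¹)
  rw [rescale_mk_qUltraspherical, mk_qUltraspherical]
  simp only [map_mul, map_add, map_pow] at h ⊢
  linear_combination h + (C t ^ 2 * X ^ 2 * rescale (q * x) (qBinomSeries q t) *
    rescale (q * x⁻¹) (qBinomSeries q t) - X ^ 2 * rescale x (qBinomSeries q t) *
    rescale x⁻¹ (qBinomSeries q t)) * hC

lemma one_sub_mul_qUltraspherical_one (hq : ∀ k, q ^ (k + 1) ≠ 1) (t x : K) :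
    (1 - q) * qUltraspherical q t 1 x = (1 - t) * (x + x⁻¹) := by
  have h := one_sub_mul_qBinomCoeff_succ hq t 0
  simp only [zero_add, pow_one, pow_zero, mul_one, qBinomCoeff_zero] at h
  simp only [qUltraspherical, Finset.Nat.sum_antidiagonal_eq_sum_range_succ_mk,
    Finset.sum_range_succ, Finset.sum_range_zero, qBinomCoeff_zero, Nat.reduceSub, pow_zero,
    pow_one, zero_add, one_mul, mul_one]
  linear_combination (x + x⁻¹) * h

lemma one_sub_mul_qUltraspherical_add_two (hq : ∀ k, q ^ (k + 1) ≠ 1) (t : K) (hx : x ≠ 0)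
    (n : ℕ) :
    (1 - q ^ (n + 2)) * qUltraspherical q t (n + 2) x +
        (1 - t ^ 2 * q ^ n) * qUltraspherical q t n x =
      (1 - t * q ^ (n + 1)) * (x + x⁻¹) * qUltraspherical q t (n + 1) x := by
  have h := congrArg (coeff (n + 2)) (mul_mk_qUltraspherical hq t hx)
  simp only [add_mul, sub_mul, one_mul, mul_assoc, map_add, map_sub, coeff_C_mul,
    coeff_succ_X_mul, coeff_rescale, coeff_mk] at h
  linear_combination h

lemma macdonald_kernel_identity {R : Type*} [CommRing R] {u v : R} (huv : u * v = 1) (t z : R) :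
    (1 - v ^ 2) * (1 - t * u ^ 2) * ((1 - u * z) * (1 - t * v * z)) +
        (1 - u ^ 2) * (1 - t * v ^ 2) * ((1 - v * z) * (1 - t * u * z)) =
      (1 - u ^ 2) * (1 - v ^ 2) *
        ((1 - t * u * z) * (1 - t * v * z) + t * ((1 - u * z) * (1 - v * z))) := by
  linear_combination (1 - t) * ((u + v) * (t * (u * v) + 1) * z -
    (u * v + 1) * (1 + t * (u * v) * z ^ 2)) * huv

/-- The Macdonald operator
`f ↦ (1 - t x²) / (1 - x²) f(p x) + (1 - t x⁻²) / (1 - x⁻²) f(p⁻¹ x)`, with `p² = q`, has the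
Rogers polynomials as eigenfunctions. Denominators are cleared, and `f(p⁻¹ x)` is written as
`f(p x⁻¹)`, which is the same for symmetric `f`. -/
theorem qUltraspherical_macdonald_eigen (hq : ∀ k, q ^ (k + 1) ≠ 1) (hp : p ≠ 0) (hpq : p ^ 2 = q)
    (t : K) (hx : x ≠ 0) (n : ℕ) :
    p ^ n * ((1 - x⁻¹ ^ 2) * (1 - t * x ^ 2) * qUltraspherical q t n (p * x) +
        (1 - x ^ 2) * (1 - t * x⁻¹ ^ 2) * qUltraspherical q t n (p * x⁻¹)) =
      (1 + t * q ^ n) * ((1 - x ^ 2) * (1 - x⁻¹ ^ 2) * qUltraspherical q t n x) := by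
  suffices h : C ((1 - x⁻¹ ^ 2) * (1 - t * x ^ 2)) *
        rescale p (mk (qUltraspherical q t · (p * x))) +
      C ((1 - x ^ 2) * (1 - t * x⁻¹ ^ 2)) * rescale p (mk (qUltraspherical q t · (p * x⁻¹))) =
      C ((1 - x ^ 2) * (1 - x⁻¹ ^ 2)) * (mk (qUltraspherical q t · x) +
        C t * rescale q (mk (qUltraspherical q t · x))) by
    have := congrArg (coeff n) h
    simp only [map_add, coeff_C_mul, coeff_rescale, coeff_mk] at this
    linear_combination this
  have hA := one_sub_mul_rescale_qBinomSeries hq t x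
  have hB := one_sub_mul_rescale_qBinomSeries hq t x⁻¹
  have hC : C x * C x⁻¹ = (1 : K⟦X⟧) := by rw [← map_mul, mul_inv_cancel₀ hx, map_one]
  have hunit (a : K) : (1 - C a * X : K⟦X⟧) ≠ 0 := fun h ↦ by
    simpa using congrArg constantCoeff h
  have e₁ : p * (p * x) = q * x := by rw [← hpq]; ring
  have e₂ : p * (p * x)⁻¹ = x⁻¹ := by field_simp
  have e₃ : p * (p * x⁻¹) = q * x⁻¹ := by rw [← hpq]; ring
  have e₄ : p * (p * x⁻¹)⁻¹ = x := by field_simp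
  rw [rescale_mk_qUltraspherical, rescale_mk_qUltraspherical, rescale_mk_qUltraspherical,
    mk_qUltraspherical, e₁, e₂, e₃, e₄]
  refine mul_left_cancel₀ (mul_ne_zero (hunit (t * x)) (hunit (t * x⁻¹))) ?_
  simp only [map_mul, map_sub, map_one, map_pow] at hA hB ⊢
  generalize rescale x (qBinomSeries q t) = A at *
  generalize rescale x⁻¹ (qBinomSeries q t) = B at *
  generalize rescale (q * x) (qBinomSeries q t) = A' at *
  generalize rescale (q * x⁻¹) (qBinomSeries q t) = B' at *
  linear_combination A * B * macdonald_kernel_identity hC (C t) X -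
    (1 - C x⁻¹ ^ 2) * (1 - C t * C x ^ 2) * (1 - C t * C x⁻¹ * X) * B * hA -
    (1 - C x ^ 2) * (1 - C t * C x⁻¹ ^ 2) * (1 - C t * C x * X) * A * hB +
    (1 - C x ^ 2) * (1 - C x⁻¹ ^ 2) * C t *
      ((1 - C t * C x⁻¹ * X) * B' * hA + (1 - C x * X) * A * hB)

lemma prod_mul_qBinomCoeff (hq : ∀ k, q ^ (k + 1) ≠ 1) (ht : ∀ k, t * q ^ k ≠ 1) {n j : ℕ}
    (hj : j ≤ n) :
    (∏ i ∈ Finset.range j, ((1 - q ^ (n - i)) * (1 - t * q ^ i)) /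
      ((1 - q ^ (1 + i)) * (1 - t * q ^ (n - i - 1)))) * qBinomCoeff q t n =
    qBinomCoeff q t j * qBinomCoeff q t (n - j) := by
  induction j with
  | zero => simp
  | succ j ih =>
    obtain ⟨l, rfl⟩ : ∃ l, n = l + (j + 1) := ⟨n - (j + 1), by omega⟩
    have e₁ : l + (j + 1) - j = l + 1 := by omega
    have h₁ : 1 - q ^ (j + 1) ≠ 0 := sub_ne_zero.mpr (hq j).symm
    have h₂ : 1 - t * q ^ l ≠ 0 := sub_ne_zero.mpr (ht l).symm
    rw [Finset.prod_range_succ, mul_right_comm, ih (by omega), e₁, Nat.add_sub_cancel,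
      Nat.add_sub_cancel, add_comm 1 j, mul_div_assoc', div_eq_iff (mul_ne_zero h₁ h₂)]
    linear_combination
      qBinomCoeff q t j * (1 - t * q ^ j) * one_sub_mul_qBinomCoeff_succ hq t l -
        qBinomCoeff q t l * (1 - t * q ^ l) * one_sub_mul_qBinomCoeff_succ hq t j

end Algebra

section RogersPoly

variable {q t x : ℂ}

/-- The monic symmetric Macdonald polynomial of type `A₁`: this is `RogersA1` with the real base
replaced by a complex one. -/
def rogersPoly (q t : ℂ) (n : ℕ) (x : ℂ) : ℂ :=
  Msym n x + ∑ j ∈ Finset.Icc 1 (n / 2),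
    (∏ i ∈ Finset.range j,
      ((1 - q ^ (n - i)) * (1 - t * q ^ i)) / ((1 - q ^ (1 + i)) * (1 - t * q ^ (n - i - 1)))) *
    Msym (n - 2 * j) x

lemma sum_range_half_add_reflect {M : Type*} [AddCommMonoid M] (n : ℕ) (f : ℕ → M) :
    ∑ j ∈ Finset.range (n / 2 + 1), (if n - 2 * j = 0 then f j else f j + f (n - j)) =
      ∑ k ∈ Finset.range (n + 1), f k := by
  induction n using Nat.twoStepInduction generalizing f with
  | zero => simp
  | one => simp [Finset.sum_range_succ]
  | more n ih _ =>
    rw [show (n + 2) / 2 = n / 2 + 1 by omega, Finset.sum_range_succ',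
      Finset.sum_range_succ _ (n + 2), Finset.sum_range_succ' _ (n + 1), ← ih fun k ↦ f (k + 1),
      add_assoc (∑ j ∈ _, _)]
    refine congrArg₂ (· + ·) (Finset.sum_congr rfl fun j hj ↦ ?_) (by simp)
    rw [Finset.mem_range] at hj
    rw [show n + 2 - 2 * (j + 1) = n - 2 * j by omega,
      show n + 2 - (j + 1) = n - j + 1 by omega]

lemma rogersPoly_eq_sum_range (q t : ℂ) (n : ℕ) (x : ℂ) :
    rogersPoly q t n x = ∑ j ∈ Finset.range (n / 2 + 1), (∏ i ∈ Finset.range j,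
      ((1 - q ^ (n - i)) * (1 - t * q ^ i)) / ((1 - q ^ (1 + i)) * (1 - t * q ^ (n - i - 1)))) *
      Msym (n - 2 * j) x := by
  rw [rogersPoly, Finset.sum_range_eq_add_Ico _ (Nat.succ_pos _)]
  simp [Finset.Ico_add_one_right_eq_Icc]

theorem rogersPoly_mul_qBinomCoeff (hq : ∀ k, q ^ (k + 1) ≠ 1) (ht : ∀ k, t * q ^ k ≠ 1)
    (hx : x ≠ 0) (n : ℕ) :
    rogersPoly q t n x * qBinomCoeff q t n = qUltraspherical q t n x := by
  rw [rogersPoly_eq_sum_range, qUltraspherical, Finset.sum_mul,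
    Finset.Nat.sum_antidiagonal_eq_sum_range_succ_mk]
  refine (Finset.sum_congr rfl fun j hj ↦ ?_).trans (sum_range_half_add_reflect n _)
  rw [Finset.mem_range] at hj
  obtain ⟨d, rfl⟩ : ∃ d, n = 2 * j + d := ⟨n - 2 * j, by omega⟩
  have hxj : x ^ j * x⁻¹ ^ j = 1 := by rw [← mul_pow, mul_inv_cancel₀ hx, one_pow]
  have e₁ : 2 * j + d - j = j + d := by omega
  have e₂ : 2 * j + d - (j + d) = j := by omega
  rw [mul_right_comm, prod_mul_qBinomCoeff hq ht (by omega), Msym, e₁, e₂, Nat.add_sub_cancel_left]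
  split_ifs with hd
  · subst hd
    linear_combination -(qBinomCoeff q t j * qBinomCoeff q t j) * hxj
  · linear_combination
      -(qBinomCoeff q t j * qBinomCoeff q t (j + d) * (x ^ d + x⁻¹ ^ d)) * hxj

lemma differentiableAt_qUltraspherical (q t : ℂ) (n : ℕ) (hx : x ≠ 0) :
    DifferentiableAt ℂ (qUltraspherical q t n) x := by
  unfold qUltraspherical
  fun_prop (disch := assumption)

end RogersPoly

section Weight

open Topology

variable {p q t x z : ℂ}

lemma norm_mul_pow_lt_one (hq : ‖q‖ < 1) (hz : ‖z‖ < 1) (k : ℕ) : ‖z * q ^ k‖ < 1 := by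
  rw [norm_mul, norm_pow]
  exact (mul_le_of_le_one_right (norm_nonneg z) (pow_le_one₀ (norm_nonneg q) hq.le)).trans_lt hz

lemma ne_one_of_norm_lt_one (hz : ‖z‖ < 1) : z ≠ 1 := by
  rintro rfl
  simp at hz

lemma mul_pow_ne_one (hq : ‖q‖ < 1) (hz : ‖z‖ < 1) (k : ℕ) : z * q ^ k ≠ 1 :=
  ne_one_of_norm_lt_one (norm_mul_pow_lt_one hq hz k)

lemma pow_succ_ne_one (hq : ‖q‖ < 1) (k : ℕ) : q ^ (k + 1) ≠ 1 := by
  rw [pow_succ']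
  exact mul_pow_ne_one hq hq k

/-- The infinite `q`-Pochhammer symbol `(z; q)_∞`. -/
def qPochInf (q z : ℂ) : ℂ := ∏' j : ℕ, (1 - z * q ^ j)

lemma summable_norm_mul_pow (hq : ‖q‖ < 1) (z : ℂ) : Summable fun j : ℕ ↦ ‖-(z * q ^ j)‖ := by
  simp only [norm_neg, norm_mul, norm_pow]
  exact (summable_geometric_of_lt_one (norm_nonneg q) hq).mul_left ‖z‖

lemma multipliable_one_sub_mul_pow (hq : ‖q‖ < 1) (z : ℂ) :
    Multipliable fun j : ℕ ↦ 1 - z * q ^ j := by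
  simpa only [sub_eq_add_neg] using multipliable_one_add_of_summable (summable_norm_mul_pow hq z)

lemma qPochInf_ne_zero (hq : ‖q‖ < 1) (hz : ‖z‖ < 1) : qPochInf q z ≠ 0 := by
  simp only [qPochInf, sub_eq_add_neg]
  refine tprod_one_add_ne_zero_of_summable (fun j ↦ ?_) (summable_norm_mul_pow hq z)
  rw [← sub_eq_add_neg]
  exact sub_ne_zero.mpr (mul_pow_ne_one hq hz j).symm

lemma qPochInf_eq_one_sub_mul (hq : ‖q‖ < 1) (z : ℂ) :
    qPochInf q z = (1 - z) * qPochInf q (q * z) := by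
  have h (j : ℕ) : 1 - q * z * q ^ j = 1 - z * q ^ (j + 1) := by ring
  have hm := (multipliable_one_sub_mul_pow hq (q * z)).congr h
  rw [qPochInf, tprod_eq_zero_mul' (f := fun j : ℕ ↦ 1 - z * q ^ j) hm, qPochInf, pow_zero,
    mul_one, tprod_congr h]

lemma differentiable_qPochInf (hq : ‖q‖ < 1) : Differentiable ℂ (qPochInf q) := by
  have h : HasProdLocallyUniformlyOn (fun (j : ℕ) (z : ℂ) ↦ 1 + -(z * q ^ j))
      (fun z ↦ ∏' j : ℕ, (1 + -(z * q ^ j))) Set.univ := by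
    refine hasProdLocallyUniformlyOn_of_forall_compact isOpen_univ fun K _ hK ↦ ?_
    obtain ⟨R, hR⟩ := hK.isBounded.exists_norm_le
    refine ((summable_geometric_of_lt_one (norm_nonneg q) hq).mul_left
      R).hasProdUniformlyOn_nat_one_add hK (.of_forall fun j z hz ↦ ?_) fun _ ↦ by fun_prop
    rw [norm_neg, norm_mul, norm_pow]
    gcongr
    exact hR z hz
  simp only [← sub_eq_add_neg] at h
  exact differentiableOn_univ.mp <| h.differentiableOn (.of_forall fun _ ↦ by
    simpa [Finset.prod_fn] using DifferentiableOn.finsetProd fun _ _ ↦ by fun_prop) isOpen_univ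

/-- The truncated theta function of type `A₁`: this is `muA1` with the real base replaced by a
complex one. -/
def truncTheta (q t x : ℂ) : ℂ :=
  ∏' j : ℕ, ((1 - x ^ 2 * q ^ j) * (1 - x⁻¹ ^ 2 * q ^ (j + 1))) /
    ((1 - t * x ^ 2 * q ^ j) * (1 - t * x⁻¹ ^ 2 * q ^ (j + 1)))

lemma truncTheta_eq_qPochInf (hq : ‖q‖ < 1) (h₁ : ‖t * x ^ 2‖ < 1) (h₂ : ‖q * (t * x⁻¹ ^ 2)‖ < 1) :
    truncTheta q t x = qPochInf q (x ^ 2) * qPochInf q (q * x⁻¹ ^ 2) /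
      (qPochInf q (t * x ^ 2) * qPochInf q (q * (t * x⁻¹ ^ 2))) := by
  have hnum := (multipliable_one_sub_mul_pow hq (x ^ 2)).hasProd.mul
    (multipliable_one_sub_mul_pow hq (q * x⁻¹ ^ 2)).hasProd
  have hden := (multipliable_one_sub_mul_pow hq (t * x ^ 2)).hasProd.mul
    (multipliable_one_sub_mul_pow hq (q * (t * x⁻¹ ^ 2))).hasProd
  have hne := mul_ne_zero (qPochInf_ne_zero hq h₁) (qPochInf_ne_zero hq h₂)
  refine (tprod_congr fun j ↦ ?_).trans (hnum.div₀ hden hne).tprod_eq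
  ring

lemma truncTheta_mul_left (hp : p ≠ 0) (hpq : p ^ 2 = q) (t x : ℂ) :
    truncTheta q t (p * x) = truncTheta q t x⁻¹ := by
  refine tprod_congr fun j ↦ ?_
  have h₁ : (p * x) ^ 2 * q ^ j = x ^ 2 * q ^ (j + 1) := by
    rw [mul_pow, hpq]
    ring
  have h₂ : (p * x)⁻¹ ^ 2 * q ^ (j + 1) = x⁻¹ ^ 2 * q ^ j := by
    rw [← hpq]
    field_simp
    ring
  rw [inv_inv, mul_assoc t, mul_assoc t, mul_assoc t, mul_assoc t, h₁, h₂]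
  ring

lemma differentiableAt_truncTheta (hq : ‖q‖ < 1) (hx : x ≠ 0) (h₁ : ‖t * x ^ 2‖ < 1)
    (h₂ : ‖q * (t * x⁻¹ ^ 2)‖ < 1) : DifferentiableAt ℂ (truncTheta q t) x := by
  have hd := differentiable_qPochInf hq
  have hne := mul_ne_zero (qPochInf_ne_zero hq h₁) (qPochInf_ne_zero hq h₂)
  have hc₁ : ContinuousAt (fun y : ℂ ↦ ‖t * y ^ 2‖) x := by fun_prop
  have hc₂ : ContinuousAt (fun y : ℂ ↦ ‖q * (t * y⁻¹ ^ 2)‖) x := by fun_prop (disch := assumption)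
  have heq : truncTheta q t =ᶠ[𝓝 x] fun y ↦ qPochInf q (y ^ 2) * qPochInf q (q * y⁻¹ ^ 2) /
      (qPochInf q (t * y ^ 2) * qPochInf q (q * (t * y⁻¹ ^ 2))) := by
    filter_upwards [hc₁.eventually_lt continuousAt_const h₁,
      hc₂.eventually_lt continuousAt_const h₂] with y hy₁ hy₂
    exact truncTheta_eq_qPochInf hq hy₁ hy₂
  refine DifferentiableAt.congr_of_eventuallyEq ?_ heq
  fun_prop (disch := assumption)

lemma differentiableAt_truncTheta_of_norm (hq : ‖q‖ < 1) (ht : ‖t‖ < 1) (hx : x ≠ 0)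
    (hx₁ : ‖x‖ ≤ 1) (hqx : ‖q‖ ≤ ‖x‖ ^ 2) : DifferentiableAt ℂ (truncTheta q t) x := by
  refine differentiableAt_truncTheta hq hx ?_ ?_
  · rw [norm_mul, norm_pow]
    exact (mul_le_of_le_one_right (norm_nonneg t) (pow_le_one₀ (norm_nonneg x) hx₁)).trans_lt ht
  · rw [mul_left_comm, norm_mul, norm_mul, norm_pow, norm_inv, inv_pow, ← div_eq_mul_inv]
    exact (mul_le_of_le_one_right (norm_nonneg t)
      (div_le_one_of_le₀ hqx (by positivity))).trans_lt ht

lemma continuousOn_truncTheta_sphere (hq : ‖q‖ < 1) (ht : ‖t‖ < 1) :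
    ContinuousOn (truncTheta q t) (Metric.sphere 0 1) := fun x hx ↦ by
  have hx' : ‖x‖ = 1 := mem_sphere_zero_iff_norm.mp hx
  exact (differentiableAt_truncTheta_of_norm hq ht (ne_zero_of_mem_unit_sphere ⟨x, hx⟩) hx'.le
    (by simpa [hx'] using hq.le)).continuousAt.continuousWithinAt

/-- The symmetric Macdonald weight
`Δ(x) = (x²; q)_∞ (x⁻²; q)_∞ / ((t x²; q)_∞ (t x⁻²; q)_∞)` of type `A₁`. -/
def symmWeight (q t x : ℂ) : ℂ :=
  qPochInf q (x ^ 2) * qPochInf q (x⁻¹ ^ 2) / (qPochInf q (t * x ^ 2) * qPochInf q (t * x⁻¹ ^ 2))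

lemma continuousOn_symmWeight_sphere (hq : ‖q‖ < 1) (ht : ‖t‖ < 1) :
    ContinuousOn (symmWeight q t) (Metric.sphere 0 1) := fun x hx ↦ by
  have hx' : ‖x‖ = 1 := mem_sphere_zero_iff_norm.mp hx
  have hx0 : x ≠ 0 := ne_zero_of_mem_unit_sphere ⟨x, hx⟩
  have hd := (differentiable_qPochInf hq).continuous
  have hne := mul_ne_zero (qPochInf_ne_zero hq (z := t * x ^ 2) (by simpa [hx'] using ht))
    (qPochInf_ne_zero hq (z := t * x⁻¹ ^ 2) (by simpa [hx'] using ht))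
  refine ContinuousAt.continuousWithinAt ?_
  unfold symmWeight
  fun_prop (disch := assumption)

lemma exists_truncTheta_eq_symmWeight_eq (hq : ‖q‖ < 1) (ht : ‖t‖ < 1) (hx : ‖x‖ = 1) :
    ∃ s, truncTheta q t x = (1 - x ^ 2) * (1 - t * x⁻¹ ^ 2) * s ∧
      truncTheta q t x⁻¹ = (1 - x⁻¹ ^ 2) * (1 - t * x ^ 2) * s ∧
      symmWeight q t x = (1 - x ^ 2) * (1 - x⁻¹ ^ 2) * s := by
  let s (y : ℂ) := qPochInf q (q * y ^ 2) * qPochInf q (q * y⁻¹ ^ 2) /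
    (qPochInf q (t * y ^ 2) * qPochInf q (t * y⁻¹ ^ 2))
  have hs : s x⁻¹ = s x := by
    simp only [s, inv_inv]
    ring
  have hW {y : ℂ} (hy : ‖y‖ = 1) : truncTheta q t y = (1 - y ^ 2) * (1 - t * y⁻¹ ^ 2) * s y := by
    have h₁ : ‖t * y ^ 2‖ < 1 := by simpa [hy] using ht
    have h₂ : ‖t * y⁻¹ ^ 2‖ < 1 := by simpa [hy] using ht
    have h₃ : ‖q * (t * y⁻¹ ^ 2)‖ < 1 := by simpa [mul_comm q] using norm_mul_pow_lt_one hq h₂ 1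
    have hne : 1 - t * y⁻¹ ^ 2 ≠ 0 := sub_ne_zero.mpr (ne_one_of_norm_lt_one h₂).symm
    simp only [s]
    rw [truncTheta_eq_qPochInf hq h₁ h₃, qPochInf_eq_one_sub_mul hq (y ^ 2),
      qPochInf_eq_one_sub_mul hq (t * y⁻¹ ^ 2)]
    generalize 1 - t * y⁻¹ ^ 2 = c at *
    field_simp
  refine ⟨s x, hW hx, ?_, ?_⟩
  · rw [hW (by simpa using hx), hs, inv_inv]
  · rw [symmWeight, qPochInf_eq_one_sub_mul hq (x ^ 2), qPochInf_eq_one_sub_mul hq (x⁻¹ ^ 2)]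
    ring

lemma truncTheta_add_truncTheta_inv (hq : ‖q‖ < 1) (ht : ‖t‖ < 1) (hx : ‖x‖ = 1) :
    truncTheta q t x + truncTheta q t x⁻¹ = (1 + t) * symmWeight q t x := by
  obtain ⟨s, h₁, h₂, h₃⟩ := exists_truncTheta_eq_symmWeight_eq hq ht hx
  have hx0 : x ≠ 0 := norm_ne_zero_iff.mp (by simp [hx])
  have hxx : x ^ 2 * x⁻¹ ^ 2 = 1 := by rw [← mul_pow, mul_inv_cancel₀ hx0, one_pow]
  rw [h₁, h₂, h₃]
  linear_combination s * (t - 1) * hxx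

lemma truncTheta_qUltraspherical_eigen (hp : p ≠ 0) (hpq : p ^ 2 = q) (hq : ‖q‖ < 1)
    (ht : ‖t‖ < 1) (hx : ‖x‖ = 1) (n : ℕ) :
    p ^ n * (truncTheta q t x⁻¹ * qUltraspherical q t n (p * x) +
        truncTheta q t x * qUltraspherical q t n (p * x⁻¹)) =
      (1 + t * q ^ n) * (qUltraspherical q t n x * symmWeight q t x) := by
  obtain ⟨s, h₁, h₂, h₃⟩ := exists_truncTheta_eq_symmWeight_eq hq ht hx
  have hx0 : x ≠ 0 := norm_ne_zero_iff.mp (by simp [hx])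
  rw [h₁, h₂, h₃]
  linear_combination s * qUltraspherical_macdonald_eigen (pow_succ_ne_one hq) hp hpq t hx0 n

end Weight

section CircleAverage

open Complex Metric Real

variable {E : Type*} [NormedAddCommGroup E]

lemma circleAverage_comp_mul_left [NormedSpace ℝ E] (f : ℂ → E) (a : ℂ) (R : ℝ) :
    circleAverage (fun z ↦ f (a * z)) 0 R = circleAverage f 0 (‖a‖ * R) := by
  have h (θ : ℝ) : circleMap 0 (‖a‖ * R) (θ + arg a) = a * circleMap 0 R θ := by
    rw [add_comm, ← circleMap_zero_mul, circleMap_zero, norm_mul_exp_arg_mul_I]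
  rw [circleAverage_eq_integral_add (arg a) (R := ‖a‖ * R)]
  simp only [h, circleAverage]

lemma circleAverage_eq_of_differentiableAt_annulus [NormedSpace ℂ E] {f : ℂ → E} {c : ℂ} {r R : ℝ}
    (hr : 0 < r) (hrR : r ≤ R) (hf : ∀ z ∈ closedBall c R \ ball c r, DifferentiableAt ℂ f z) :
    circleAverage f c r = circleAverage f c R := by
  rw [circleAverage_eq_circleIntegral hr.ne', circleAverage_eq_circleIntegral (hr.trans_le hrR).ne',
    circleIntegral_sub_center_inv_smul_eq_of_differentiable_on_annulus_off_countable hr hrR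
      Set.countable_empty (fun z hz ↦ (hf z hz).continuousAt.continuousWithinAt)
      fun z hz ↦ hf z ⟨ball_subset_closedBall hz.1.1, fun h ↦ hz.1.2 (ball_subset_closedBall h)⟩]

lemma continuousOn_comp_inv_unitSphere {Y : Type*} [TopologicalSpace Y] {f : ℂ → Y}
    (hf : ContinuousOn f (sphere 0 1)) : ContinuousOn (fun z ↦ f z⁻¹) (sphere 0 1) :=
  hf.comp (continuousOn_inv₀.mono fun _ hz ↦ ne_zero_of_mem_unit_sphere ⟨_, hz⟩)
    fun _ hz ↦ by simpa using hz

lemma circleAverage_add_comp_inv [NormedSpace ℝ E] {f : ℂ → E}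
    (hf : ContinuousOn f (sphere 0 1)) :
    circleAverage (fun z ↦ f z + f z⁻¹) 0 1 = 2 • circleAverage f 0 1 := by
  rw [circleAverage_fun_add (hf.circleIntegrable zero_le_one)
    ((continuousOn_comp_inv_unitSphere hf).circleIntegrable zero_le_one),
    circleAverage_zero_one_congr_inv, two_nsmul]

lemma circleAverage_zero_one_eq (f : ℂ → ℂ) :
    circleAverage f 0 1 = 1 / (2 * (π : ℂ)) * ∫ φ : ℝ in 0..2 * π, f (exp (I * φ)) := by
  simp [circleAverage, circleMap_zero, mul_comm I]

end CircleAverage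

section Orthogonality

open Metric Real

variable {p q t : ℂ} {f g h : ℂ → ℂ}

lemma continuousOn_qUltraspherical_sphere (q t : ℂ) (n : ℕ) :
    ContinuousOn (qUltraspherical q t n) (sphere 0 1) := fun x hx ↦
  (differentiableAt_qUltraspherical q t n
    (ne_zero_of_mem_unit_sphere ⟨x, hx⟩)).continuousAt.continuousWithinAt

/-- Self-adjointness of the Macdonald operator, before symmetrization: move the contour from
`|x| = |p|` to `|x| = 1`, then substitute `x ↦ x⁻¹`. -/
theorem circleAverage_truncTheta_shift_comm (hp : p ≠ 0) (hpq : p ^ 2 = q) (hq : ‖q‖ < 1)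
    (ht : ‖t‖ < 1) (hf : ∀ x ≠ 0, DifferentiableAt ℂ f x) (hg : ∀ x ≠ 0, DifferentiableAt ℂ g x)
    (hf_inv : ∀ x, f x⁻¹ = f x) (hg_inv : ∀ x, g x⁻¹ = g x) :
    circleAverage (fun x ↦ truncTheta q t x⁻¹ * (f (p * x) * g x)) 0 1 =
      circleAverage (fun x ↦ truncTheta q t x⁻¹ * (g (p * x) * f x)) 0 1 := by
  have hpq' : ‖p‖ ^ 2 = ‖q‖ := by rw [← norm_pow, hpq]
  have hp₁ : ‖p‖ ≤ 1 := (pow_le_one_iff_of_nonneg (norm_nonneg p) two_ne_zero).mp (hpq' ▸ hq.le)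
  let F (x : ℂ) := truncTheta q t x * (f x * g (p⁻¹ * x))
  have hF (x : ℂ) (hx : x ∈ closedBall 0 1 \ ball 0 ‖p‖) : DifferentiableAt ℂ F x := by
    have hx₁ : ‖x‖ ≤ 1 := mem_closedBall_zero_iff.mp hx.1
    have hpx : ‖p‖ ≤ ‖x‖ := not_lt.mp fun h ↦ hx.2 (mem_ball_zero_iff.mpr h)
    have hx0 : x ≠ 0 := norm_pos_iff.mp ((norm_pos_iff.mpr hp).trans_le hpx)
    have hW := differentiableAt_truncTheta_of_norm hq ht hx0 hx₁ (hpq' ▸ by gcongr)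
    have hgx := (hg (p⁻¹ * x) (mul_ne_zero (inv_ne_zero hp) hx0)).comp x
      (differentiableAt_id.const_mul p⁻¹)
    exact hW.mul ((hf x hx0).mul hgx)
  calc circleAverage (fun x ↦ truncTheta q t x⁻¹ * (f (p * x) * g x)) 0 1
    _ = circleAverage (fun x ↦ F (p * x)) 0 1 := by
      simp only [F, truncTheta_mul_left hp hpq, inv_mul_cancel_left₀ hp]
    _ = circleAverage F 0 ‖p‖ := by rw [circleAverage_comp_mul_left, mul_one]
    _ = circleAverage F 0 1 :=
      circleAverage_eq_of_differentiableAt_annulus (norm_pos_iff.mpr hp) hp₁ hF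
    _ = circleAverage (fun x ↦ F x⁻¹) 0 1 := circleAverage_zero_one_congr_inv.symm
    _ = circleAverage (fun x ↦ truncTheta q t x⁻¹ * (g (p * x) * f x)) 0 1 := by
      simp only [F, ← mul_inv, hf_inv, hg_inv, mul_comm]

/-- The bilinear form `⟨f, g⟩ = (2π)⁻¹ ∫ f(e^{iφ}) g(e^{iφ}) Δ(e^{iφ}) dφ` attached to the symmetric
weight. There is no complex conjugation, since `t` is complex. -/
def macdonaldInner (q t : ℂ) (f g : ℂ → ℂ) : ℂ :=
  circleAverage (fun x ↦ f x * g x * symmWeight q t x) 0 1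

lemma macdonaldInner_comm (q t : ℂ) (f g : ℂ → ℂ) :
    macdonaldInner q t f g = macdonaldInner q t g f := by
  simp only [macdonaldInner, mul_comm (f _)]

lemma macdonaldInner_congr_left {f₁ f₂ : ℂ → ℂ} (hf : Set.EqOn f₁ f₂ (sphere 0 1)) :
    macdonaldInner q t f₁ g = macdonaldInner q t f₂ g :=
  circleAverage_congr_sphere fun x hx ↦ by
    simp only [hf (by simpa using hx)]

lemma macdonaldInner_const_mul_left (c : ℂ) :
    macdonaldInner q t (fun x ↦ c * f x) g = c * macdonaldInner q t f g := by
  simp only [macdonaldInner, mul_assoc]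
  exact circleAverage_fun_smul (a := c) (f := fun x ↦ f x * (g x * symmWeight q t x))

lemma macdonaldInner_add_left (hq : ‖q‖ < 1) (ht : ‖t‖ < 1) (hf : ContinuousOn f (sphere 0 1))
    (hg : ContinuousOn g (sphere 0 1)) (hh : ContinuousOn h (sphere 0 1)) :
    macdonaldInner q t (fun x ↦ f x + g x) h =
      macdonaldInner q t f h + macdonaldInner q t g h := by
  have hΔ := continuousOn_symmWeight_sphere hq ht
  simp only [macdonaldInner, add_mul]
  exact circleAverage_fun_add (((hf.mul hh).mul hΔ).circleIntegrable zero_le_one)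
    (((hg.mul hh).mul hΔ).circleIntegrable zero_le_one)

lemma two_mul_circleAverage_mul_truncTheta (hq : ‖q‖ < 1) (ht : ‖t‖ < 1)
    (hf : ContinuousOn f (sphere 0 1)) (hg : ContinuousOn g (sphere 0 1))
    (hf_inv : ∀ x, f x⁻¹ = f x) (hg_inv : ∀ x, g x⁻¹ = g x) :
    2 * circleAverage (fun x ↦ f x * g x * truncTheta q t x) 0 1 =
      (1 + t) * macdonaldInner q t f g := by
  have h := circleAverage_add_comp_inv (f := fun x ↦ f x * g x * truncTheta q t x)
    ((hf.mul hg).mul (continuousOn_truncTheta_sphere hq ht))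
  rw [nsmul_eq_mul, Nat.cast_ofNat] at h
  rw [macdonaldInner, ← smul_eq_mul (1 + t), ← circleAverage_fun_smul, ← h]
  refine circleAverage_congr_sphere fun x hx ↦ ?_
  have hx' : ‖x‖ = 1 := by simpa using hx
  simp only [hf_inv, hg_inv, smul_eq_mul]
  linear_combination f x * g x * truncTheta_add_truncTheta_inv hq ht hx'

lemma two_mul_circleAverage_shift_qUltraspherical (hp : p ≠ 0) (hpq : p ^ 2 = q) (hq : ‖q‖ < 1)
    (ht : ‖t‖ < 1) (hg : ContinuousOn g (sphere 0 1)) (hg_inv : ∀ x, g x⁻¹ = g x) (n : ℕ) :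
    2 * p ^ n * circleAverage
        (fun x ↦ truncTheta q t x⁻¹ * (qUltraspherical q t n (p * x) * g x)) 0 1 =
      (1 + t * q ^ n) * macdonaldInner q t (qUltraspherical q t n) g := by
  have hC : ContinuousOn (fun x ↦ qUltraspherical q t n (p * x)) (sphere 0 1) := fun x hx ↦
    ((differentiableAt_qUltraspherical q t n (mul_ne_zero hp
      (ne_zero_of_mem_unit_sphere ⟨x, hx⟩))).comp x
        (differentiableAt_id.const_mul p)).continuousAt.continuousWithinAt
  have h := circleAverage_add_comp_inv
    (f := fun x ↦ truncTheta q t x⁻¹ * (qUltraspherical q t n (p * x) * g x))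
    ((continuousOn_comp_inv_unitSphere (continuousOn_truncTheta_sphere hq ht)).mul (hC.mul hg))
  rw [nsmul_eq_mul, Nat.cast_ofNat] at h
  rw [mul_comm 2, mul_assoc, ← h, macdonaldInner, ← smul_eq_mul (p ^ n),
    ← smul_eq_mul (1 + t * q ^ n), ← circleAverage_fun_smul, ← circleAverage_fun_smul]
  refine circleAverage_congr_sphere fun x hx ↦ ?_
  have hx' : ‖x‖ = 1 := by simpa using hx
  simp only [hg_inv, inv_inv, smul_eq_mul]
  linear_combination g x * truncTheta_qUltraspherical_eigen hp hpq hq ht hx' n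

lemma mul_one_add_ne_of_ne (hp : p ≠ 0) (hp₁ : ‖p‖ < 1) (ht : ‖t‖ < 1) {m n : ℕ} (hmn : m ≠ n) :
    p ^ n * (1 + t * (p ^ 2) ^ m) ≠ p ^ m * (1 + t * (p ^ 2) ^ n) := by
  have hpow : p ^ n ≠ p ^ m := fun h ↦ hmn <|
    (pow_right_injective₀ (norm_pos_iff.mpr hp) hp₁.ne
      (by simpa only [norm_pow] using congrArg norm h)).symm
  have hfactor : (p ^ n - p ^ m) * (1 - t * p ^ (m + n)) ≠ 0 :=
    mul_ne_zero (sub_ne_zero.mpr hpow) (sub_ne_zero.mpr (mul_pow_ne_one hp₁ ht _).symm)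
  contrapose hfactor
  linear_combination hfactor

theorem macdonaldInner_qUltraspherical_of_ne (hq0 : q ≠ 0) (hq : ‖q‖ < 1) (ht : ‖t‖ < 1)
    {m n : ℕ} (hmn : m ≠ n) :
    macdonaldInner q t (qUltraspherical q t m) (qUltraspherical q t n) = 0 := by
  obtain ⟨p, rfl⟩ := IsAlgClosed.exists_pow_nat_eq q two_pos
  have hp : p ≠ 0 := fun h ↦ hq0 (by simp [h])
  have hp₁ : ‖p‖ < 1 := by rwa [norm_pow, sq_lt_one_iff₀ (norm_nonneg p)] at hq
  have hshift (k l : ℕ) := two_mul_circleAverage_shift_qUltraspherical hp rfl hq ht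
    (continuousOn_qUltraspherical_sphere (p ^ 2) t k) (qUltraspherical_inv (p ^ 2) t k) l
  have hcomm := circleAverage_truncTheta_shift_comm hp rfl hq ht
    (fun _ ↦ differentiableAt_qUltraspherical (p ^ 2) t m)
    (fun _ ↦ differentiableAt_qUltraspherical (p ^ 2) t n)
    (qUltraspherical_inv (p ^ 2) t m) (qUltraspherical_inv (p ^ 2) t n)
  have hm := hshift n m
  have hn := hshift m n
  rw [macdonaldInner_comm, ← hcomm] at hn
  refine (mul_eq_zero.mp ?_).resolve_left (sub_ne_zero.mpr (mul_one_add_ne_of_ne hp hp₁ ht hmn))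
  linear_combination p ^ m * hn - p ^ n * hm

lemma macdonaldInner_qUltraspherical_add_two (hq : ‖q‖ < 1) (ht : ‖t‖ < 1)
    (hg : ContinuousOn g (sphere 0 1)) (n : ℕ) :
    (1 - q ^ (n + 2)) * macdonaldInner q t (qUltraspherical q t (n + 2)) g +
        (1 - t ^ 2 * q ^ n) * macdonaldInner q t (qUltraspherical q t n) g =
      (1 - t * q ^ (n + 1)) *
        macdonaldInner q t (fun x ↦ (x + x⁻¹) * qUltraspherical q t (n + 1) x) g := by
  have hC (c : ℂ) (k : ℕ) : ContinuousOn (fun x ↦ c * qUltraspherical q t k x) (sphere 0 1) :=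
    continuousOn_const.mul (continuousOn_qUltraspherical_sphere q t k)
  simp only [← macdonaldInner_const_mul_left]
  rw [← macdonaldInner_add_left hq ht (hC _ _) (hC _ _) hg]
  refine macdonaldInner_congr_left fun x hx ↦ ?_
  simpa only [mul_assoc] using one_sub_mul_qUltraspherical_add_two (pow_succ_ne_one hq) t
    (ne_zero_of_mem_unit_sphere ⟨x, hx⟩) n

lemma macdonaldInner_qUltraspherical_succ_self (hq0 : q ≠ 0) (hq : ‖q‖ < 1) (ht : ‖t‖ < 1)
    (n : ℕ) :
    (1 - q ^ (n + 1)) *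
        macdonaldInner q t (qUltraspherical q t (n + 1)) (qUltraspherical q t (n + 1)) =
      (1 - t * q ^ n) * macdonaldInner q t (fun x ↦ (x + x⁻¹) * qUltraspherical q t n x)
        (qUltraspherical q t (n + 1)) := by
  cases n with
  | zero =>
    simp only [← macdonaldInner_const_mul_left]
    exact macdonaldInner_congr_left fun x _ ↦ by
      simpa using one_sub_mul_qUltraspherical_one (pow_succ_ne_one hq) t x
  | succ n =>
    have h := macdonaldInner_qUltraspherical_add_two hq ht
      (continuousOn_qUltraspherical_sphere q t (n + 2)) n
    rwa [macdonaldInner_qUltraspherical_of_ne hq0 hq ht (by omega : n ≠ n + 2), mul_zero,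
      add_zero] at h

lemma macdonaldInner_qUltraspherical_step (hq0 : q ≠ 0) (hq : ‖q‖ < 1) (ht : ‖t‖ < 1) (n : ℕ) :
    (1 - t * q ^ (n + 1)) * ((1 - q ^ (n + 1)) *
        macdonaldInner q t (qUltraspherical q t (n + 1)) (qUltraspherical q t (n + 1))) =
      (1 - t * q ^ n) * ((1 - t ^ 2 * q ^ n) *
        macdonaldInner q t (qUltraspherical q t n) (qUltraspherical q t n)) := by
  have h := macdonaldInner_qUltraspherical_add_two hq ht
    (continuousOn_qUltraspherical_sphere q t n) n
  rw [macdonaldInner_qUltraspherical_of_ne hq0 hq ht (by omega : n + 2 ≠ n), mul_zero,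
    zero_add] at h
  have hswap : macdonaldInner q t (fun x ↦ (x + x⁻¹) * qUltraspherical q t n x)
        (qUltraspherical q t (n + 1)) =
      macdonaldInner q t (fun x ↦ (x + x⁻¹) * qUltraspherical q t (n + 1) x)
        (qUltraspherical q t n) := by
    simp only [macdonaldInner, mul_right_comm]
  rw [macdonaldInner_qUltraspherical_succ_self hq0 hq ht, h, hswap]
  ring

theorem macdonaldInner_qUltraspherical_self (hq0 : q ≠ 0) (hq : ‖q‖ < 1) (ht : ‖t‖ < 1) (n : ℕ) :
    macdonaldInner q t (qUltraspherical q t n) (qUltraspherical q t n) =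
      qBinomCoeff q t n ^ 2 *
        (∏ j ∈ Finset.range n, ((1 - q ^ (j + 1)) * (1 - t ^ 2 * q ^ j)) /
          ((1 - t * q ^ (j + 1)) * (1 - t * q ^ j))) * macdonaldInner q t 1 1 := by
  induction n with
  | zero => simp
  | succ n ih =>
    have ha : 1 - t * q ^ n ≠ 0 := sub_ne_zero.mpr (mul_pow_ne_one hq ht n).symm
    have hb : 1 - t * q ^ (n + 1) ≠ 0 := sub_ne_zero.mpr (mul_pow_ne_one hq ht (n + 1)).symm
    have hc : 1 - q ^ (n + 1) ≠ 0 := sub_ne_zero.mpr (pow_succ_ne_one hq n).symm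
    refine mul_left_cancel₀ hb (mul_left_cancel₀ hc ?_)
    rw [mul_left_comm, macdonaldInner_qUltraspherical_step hq0 hq ht, ih, Finset.prod_range_succ,
      qBinomCoeff_succ]
    field_simp

theorem circleAverage_qUltraspherical_mul_truncTheta (hq0 : q ≠ 0) (hq : ‖q‖ < 1) (ht : ‖t‖ < 1)
    (m n : ℕ) :
    circleAverage (fun x ↦ qUltraspherical q t m x * qUltraspherical q t n x * truncTheta q t x)
        0 1 =
      (if m = n then qBinomCoeff q t n ^ 2 *
          ∏ j ∈ Finset.range n, ((1 - q ^ (j + 1)) * (1 - t ^ 2 * q ^ j)) /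
            ((1 - t * q ^ (j + 1)) * (1 - t * q ^ j))
        else 0) * circleAverage (truncTheta q t) 0 1 := by
  have hmn := two_mul_circleAverage_mul_truncTheta hq ht
    (continuousOn_qUltraspherical_sphere q t m) (continuousOn_qUltraspherical_sphere q t n)
    (qUltraspherical_inv q t m) (qUltraspherical_inv q t n)
  have h₁ := two_mul_circleAverage_mul_truncTheta (f := 1) (g := 1) hq ht
    continuousOn_const continuousOn_const (fun _ ↦ rfl) (fun _ ↦ rfl)
  simp only [Pi.one_apply, one_mul] at h₁
  refine mul_left_cancel₀ two_ne_zero ?_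
  rw [hmn, mul_left_comm, h₁]
  split_ifs with h
  · rw [h, macdonaldInner_qUltraspherical_self hq0 hq ht]
    ring
  · rw [macdonaldInner_qUltraspherical_of_ne hq0 hq ht h, mul_zero, zero_mul]

end Orthogonality

theorem rogersA1_orthogonality_general {q t : ℂ} (hq0 : q ≠ 0) (hq : ‖q‖ < 1) (ht : ‖t‖ < 1)
    (m n : ℕ) :
    Real.circleAverage (fun x ↦ rogersPoly q t m x * rogersPoly q t n x * truncTheta q t x) 0 1 =
      (if m = n then
          ∏ j ∈ Finset.range n, ((1 - q ^ (j + 1)) * (1 - t ^ 2 * q ^ j)) /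
            ((1 - t * q ^ (j + 1)) * (1 - t * q ^ j))
        else 0) * Real.circleAverage (truncTheta q t) 0 1 := by
  have hq' := pow_succ_ne_one hq
  have ht' := mul_pow_ne_one hq ht
  have hmonic : qBinomCoeff q t m * qBinomCoeff q t n *
      Real.circleAverage (fun x ↦ rogersPoly q t m x * rogersPoly q t n x * truncTheta q t x) 0 1 =
      Real.circleAverage
        (fun x ↦ qUltraspherical q t m x * qUltraspherical q t n x * truncTheta q t x) 0 1 := by
    rw [← smul_eq_mul (qBinomCoeff q t m * _), ← Real.circleAverage_fun_smul]
    refine Real.circleAverage_congr_sphere fun x hx ↦ ?_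
    have hx0 : x ≠ 0 := norm_ne_zero_iff.mp (by simp_all)
    simp only [← rogersPoly_mul_qBinomCoeff hq' ht' hx0, smul_eq_mul]
    ring
  refine mul_left_cancel₀ (mul_ne_zero (qBinomCoeff_ne_zero hq' ht' m)
    (qBinomCoeff_ne_zero hq' ht' n)) ?_
  rw [hmonic, circleAverage_qUltraspherical_mul_truncTheta hq0 hq ht]
  split_ifs with h
  · rw [h]
    ring
  · ring

/-- orthogonality and norm formula for the Rogers polynomials of type A₁. -/
theorem rogersA1_orthogonality (q : ℝ) (hq0 : 0 < q) (hq1 : q < 1)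
    (t : ℂ) (ht : ‖t‖ < 1) (m n : ℕ) :
    (1 / (2 * (Real.pi : ℂ))) *
      ∫ φ : ℝ in (0:ℝ)..(2 * Real.pi),
        RogersA1 q t m (Complex.exp (Complex.I * (φ : ℂ))) *
          RogersA1 q t n (Complex.exp (Complex.I * (φ : ℂ))) *
          muA1 q t (Complex.exp (Complex.I * (φ : ℂ))) =
    (if m = n then
        ∏ j ∈ Finset.range n,
          ((1 - (q : ℂ) ^ (j + 1)) * (1 - t ^ 2 * (q : ℂ) ^ j)) /
          ((1 - t * (q : ℂ) ^ (j + 1)) * (1 - t * (q : ℂ) ^ j))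
      else 0) *
      ((1 / (2 * (Real.pi : ℂ))) *
        ∫ φ : ℝ in (0:ℝ)..(2 * Real.pi), muA1 q t (Complex.exp (Complex.I * (φ : ℂ)))) := by
  have h := rogersA1_orthogonality_general (Complex.ofReal_ne_zero.mpr hq0.ne')
    (by simpa [abs_of_pos hq0] using hq1) ht m n
  rwa [circleAverage_zero_one_eq, circleAverage_zero_one_eq] at h

end
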